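/- arXiv:2512.09688 — 5 statements merged into one kernel-verified Lean document; each statement's English description precedes it below -/
import Mathlib

section
/- The pair (θ, w) is a classical solution of the clamped Reissner–Mindlin plate system on the unit square Ω = (0,1)²: for every (x,y) ∈ Ω one has −∇·(C ε(θ))(x,y) − λ t⁻² (∇w(x,y) − θ(x,y)) = 0 and −λ t⁻² ∇·(∇w − θ)(x,y) = g(x,y), and moreover θ(x,y) = 0 and w(x,y) = 0 for every (x,y) on the boundary of [0,1]². -/
/-!
Write `P(s) = s³(s-1)³` and `W₀(x,y) = P(x) P(y) / 3`. The key observation is that `θ = ∇W₀` and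
`w = W₀ - κ ΔW₀` with `κ = t² / (5(1-ν))`. Since `θ` is a gradient, `ε(θ)` is the Hessian of `W₀`,
and therefore `∇·(C ε(θ)) = D ∇ΔW₀`. The shear vector is `∇w - θ = -κ ∇ΔW₀`, and
`λ / (5(1-ν)) = D`, so the shear force `λ t⁻² (∇w - θ) = -D ∇ΔW₀` balances the bending term. Its
negative divergence is `D Δ²W₀ = g`.

Every field is a sum of products of one-variable polynomials taken from the chain
`P' = 3p`, `p' = 2a`, `a' = d`, `d' = 12b`, recorded in `hasDerivAt_P`, …, `hasDerivAt_d`. The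
partial derivatives (`pdx_θ₁`, …, `shear₂`) follow from this chain, and both equations become
algebraic identities. Every term of `θ` and `w` is a product of values of `P`, `p` and `a`, one in
each variable, and all three vanish at `0` and `1`, which gives the boundary conditions.
-/

noncomputable section

open Set

/-- Partial derivative in the first variable. -/
def pdx (f : ℝ → ℝ → ℝ) (x y : ℝ) : ℝ := deriv (fun s => f s y) x

/-- Partial derivative in the second variable. -/
def pdy (f : ℝ → ℝ → ℝ) (x y : ℝ) : ℝ := deriv (fun s => f x s) y

/-- Young's modulus. -/
def E : ℝ := 1.092

/-- Poisson's ratio. -/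
def ν : ℝ := 0.3

/-- D = E / (12 (1 - ν²)). -/
def Dc : ℝ := E / (12 * (1 - ν ^ 2))

/-- Shear correction factor λ = 5E / (12 (1 + ν)). -/
def lam : ℝ := 5 * E / (12 * (1 + ν))

/-- First component of the rotation field θ. -/
def θ₁ (x y : ℝ) : ℝ := y ^ 3 * (y - 1) ^ 3 * x ^ 2 * (x - 1) ^ 2 * (2 * x - 1)

/-- Second component of the rotation field θ. -/
def θ₂ (x y : ℝ) : ℝ := x ^ 3 * (x - 1) ^ 3 * y ^ 2 * (y - 1) ^ 2 * (2 * y - 1)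

/-- Transverse displacement w (depending on the thickness t). -/
def w (t x y : ℝ) : ℝ :=
  (1 / 3) * x ^ 3 * (x - 1) ^ 3 * y ^ 3 * (y - 1) ^ 3
    - (2 * t ^ 2 / (5 * (1 - ν))) *
      (y ^ 3 * (y - 1) ^ 3 * x * (x - 1) * (5 * x ^ 2 - 5 * x + 1)
        + x ^ 3 * (x - 1) ^ 3 * y * (y - 1) * (5 * y ^ 2 - 5 * y + 1))

/-- First component of the row-wise divergence of C ε(θ), where
    (C τ) = D ((1-ν) τ + ν tr(τ) I₂) and ε(θ) = (∇θ + ∇θᵀ)/2. -/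
def divCeps₁ (f₁ f₂ : ℝ → ℝ → ℝ) (x y : ℝ) : ℝ :=
  pdx (fun a b => Dc * ((1 - ν) * pdx f₁ a b + ν * (pdx f₁ a b + pdy f₂ a b))) x y
    + pdy (fun a b => Dc * ((1 - ν) * ((pdy f₁ a b + pdx f₂ a b) / 2))) x y

/-- Second component of the row-wise divergence of C ε(θ). -/
def divCeps₂ (f₁ f₂ : ℝ → ℝ → ℝ) (x y : ℝ) : ℝ :=
  pdx (fun a b => Dc * ((1 - ν) * ((pdy f₁ a b + pdx f₂ a b) / 2))) x y
    + pdy (fun a b => Dc * ((1 - ν) * pdy f₂ a b + ν * (pdx f₁ a b + pdy f₂ a b))) x y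

/-- Divergence of the shear vector ∇w - θ. -/
def divShear (W f₁ f₂ : ℝ → ℝ → ℝ) (x y : ℝ) : ℝ :=
  pdx (fun a b => pdx W a b - f₁ a b) x y + pdy (fun a b => pdy W a b - f₂ a b) x y

/-- Body load g. -/
def g (x y : ℝ) : ℝ :=
  (E / (12 * (1 - ν ^ 2))) *
    (12 * y * (y - 1) * (5 * x ^ 2 - 5 * x + 1) *
        (2 * y ^ 2 * (y - 1) ^ 2 + x * (x - 1) * (5 * y ^ 2 - 5 * y + 1))
      + 12 * x * (x - 1) * (5 * y ^ 2 - 5 * y + 1) *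
        (2 * x ^ 2 * (x - 1) ^ 2 + y * (y - 1) * (5 * x ^ 2 - 5 * x + 1)))

namespace ReissnerMindlin

/-- The one-variable clamped profile; `W₀(x,y) = P(x) P(y) / 3` satisfies `∇W₀ = θ`. -/
def P (s : ℝ) : ℝ := s ^ 3 * (s - 1) ^ 3

/-- One third of the derivative of `P`. -/
def p (s : ℝ) : ℝ := s ^ 2 * (s - 1) ^ 2 * (2 * s - 1)

/-- Half the derivative of `p`, so that `ΔW₀ = 2 (a(x) P(y) + P(x) a(y))`. -/
def a (s : ℝ) : ℝ := s * (s - 1) * (5 * s ^ 2 - 5 * s + 1)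

/-- The derivative of `a`. -/
def d (s : ℝ) : ℝ := 20 * s ^ 3 - 30 * s ^ 2 + 12 * s - 1

/-- One twelfth of the derivative of `d`. -/
def b (s : ℝ) : ℝ := 5 * s ^ 2 - 5 * s + 1

lemma hasDerivAt_P (s : ℝ) : HasDerivAt P (3 * p s) s := by
  have h := ((hasDerivAt_id s).pow 3).mul (((hasDerivAt_id s).sub_const 1).pow 3)
  refine h.congr_deriv ?_
  simp [p]
  ring

lemma hasDerivAt_p (s : ℝ) : HasDerivAt p (2 * a s) s := by
  have h := (((hasDerivAt_id s).pow 2).mul (((hasDerivAt_id s).sub_const 1).pow 2)).mul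
    (((hasDerivAt_id s).const_mul 2).sub_const 1)
  refine h.congr_deriv ?_
  simp [a]
  ring

lemma hasDerivAt_a (s : ℝ) : HasDerivAt a (d s) s := by
  have h := ((hasDerivAt_id s).mul ((hasDerivAt_id s).sub_const 1)).mul
    (((((hasDerivAt_id s).pow 2).const_mul 5).sub ((hasDerivAt_id s).const_mul 5)).add_const 1)
  refine h.congr_deriv ?_
  simp [d]
  ring

lemma hasDerivAt_d (s : ℝ) : HasDerivAt d (12 * b s) s := by
  have h := (((((hasDerivAt_id s).pow 3).const_mul 20).sub
    (((hasDerivAt_id s).pow 2).const_mul 30)).add ((hasDerivAt_id s).const_mul 12)).sub_const 1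
  refine h.congr_deriv ?_
  simp [b]
  ring

/-- Differentiation of `u f + v h` for constants `u` and `v`: with one variable frozen, every
field below has this form. -/
lemma deriv_comb {F f h : ℝ → ℝ} {f' h' s : ℝ} (u v : ℝ) (hF : ∀ r, F r = u * f r + v * h r)
    (hf : HasDerivAt f f' s) (hh : HasDerivAt h h' s) : deriv F s = u * f' + v * h' := by
  rw [funext hF]
  exact ((hf.const_mul u).add (hh.const_mul v)).deriv

lemma θ₁_eq (x y : ℝ) : θ₁ x y = p x * P y := by
  simp only [θ₁, p, P]; ring

lemma θ₂_eq (x y : ℝ) : θ₂ x y = P x * p y := by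
  simp only [θ₂, p, P]; ring

lemma w_eq (t x y : ℝ) : w t x y =
    1 / 3 * (P x * P y) - 2 * t ^ 2 / (5 * (1 - ν)) * (a x * P y + P x * a y) := by
  simp only [w, a, P]; ring

lemma pdx_θ₁ (x y : ℝ) : pdx θ₁ x y = 2 * a x * P y :=
  (deriv_comb (P y) 0 (fun r => by rw [θ₁_eq]; ring) (hasDerivAt_p x) (hasDerivAt_p x)).trans
    (by ring)

lemma pdy_θ₁ (x y : ℝ) : pdy θ₁ x y = 3 * p x * p y :=
  (deriv_comb (p x) 0 (fun r => by rw [θ₁_eq]; ring) (hasDerivAt_P y) (hasDerivAt_P y)).trans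
    (by ring)

lemma pdx_θ₂ (x y : ℝ) : pdx θ₂ x y = 3 * p x * p y :=
  (deriv_comb (p y) 0 (fun r => by rw [θ₂_eq]; ring) (hasDerivAt_P x) (hasDerivAt_P x)).trans
    (by ring)

lemma pdy_θ₂ (x y : ℝ) : pdy θ₂ x y = 2 * P x * a y :=
  (deriv_comb (P x) 0 (fun r => by rw [θ₂_eq]; ring) (hasDerivAt_p y) (hasDerivAt_p y)).trans
    (by ring)

/-- First component of `∇·(C ε(θ)) = D ∇ΔW₀`. -/
lemma divCeps₁_eq (x y : ℝ) : divCeps₁ θ₁ θ₂ x y = 2 * Dc * (d x * P y + 3 * p x * a y) := by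
  unfold divCeps₁
  simp only [pdx_θ₁, pdy_θ₁, pdx_θ₂, pdy_θ₂]
  have h₁ : pdx (fun x y => Dc * ((1 - ν) * (2 * a x * P y) +
      ν * (2 * a x * P y + 2 * P x * a y))) x y = _ :=
    deriv_comb (Dc * 2 * P y) (Dc * ν * 2 * a y) (fun r => by ring)
      (hasDerivAt_a x) (hasDerivAt_P x)
  have h₂ : pdy (fun x y => Dc * ((1 - ν) * ((3 * p x * p y + 3 * p x * p y) / 2))) x y = _ :=
    deriv_comb (Dc * (1 - ν) * 3 * p x) 0 (fun r => by ring) (hasDerivAt_p y) (hasDerivAt_p y)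
  rw [h₁, h₂]
  ring

/-- Second component of `∇·(C ε(θ)) = D ∇ΔW₀`. -/
lemma divCeps₂_eq (x y : ℝ) : divCeps₂ θ₁ θ₂ x y = 2 * Dc * (3 * a x * p y + P x * d y) := by
  unfold divCeps₂
  simp only [pdx_θ₁, pdy_θ₁, pdx_θ₂, pdy_θ₂]
  have h₁ : pdx (fun x y => Dc * ((1 - ν) * ((3 * p x * p y + 3 * p x * p y) / 2))) x y = _ :=
    deriv_comb (Dc * (1 - ν) * 3 * p y) 0 (fun r => by ring) (hasDerivAt_p x) (hasDerivAt_p x)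
  have h₂ : pdy (fun x y => Dc * ((1 - ν) * (2 * P x * a y) +
      ν * (2 * a x * P y + 2 * P x * a y))) x y = _ :=
    deriv_comb (Dc * 2 * P x) (Dc * ν * 2 * a x) (fun r => by ring)
      (hasDerivAt_a y) (hasDerivAt_P y)
  rw [h₁, h₂]
  ring

/-- First component of the shear vector `∇w - θ = -κ ∇ΔW₀`. -/
lemma shear₁ (t x y : ℝ) : pdx (w t) x y - θ₁ x y =
    -(2 * t ^ 2 / (5 * (1 - ν))) * (d x * P y + 3 * p x * a y) := by
  have h : pdx (w t) x y = _ :=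
    deriv_comb (1 / 3 * P y - 2 * t ^ 2 / (5 * (1 - ν)) * a y)
      (-(2 * t ^ 2 / (5 * (1 - ν))) * P y) (fun r => by rw [w_eq]; ring)
      (hasDerivAt_P x) (hasDerivAt_a x)
  rw [h, θ₁_eq]
  ring

/-- Second component of the shear vector `∇w - θ = -κ ∇ΔW₀`. -/
lemma shear₂ (t x y : ℝ) : pdy (w t) x y - θ₂ x y =
    -(2 * t ^ 2 / (5 * (1 - ν))) * (3 * a x * p y + P x * d y) := by
  have h : pdy (w t) x y = _ :=
    deriv_comb (1 / 3 * P x - 2 * t ^ 2 / (5 * (1 - ν)) * a x)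
      (-(2 * t ^ 2 / (5 * (1 - ν))) * P x) (fun r => by rw [w_eq]; ring)
      (hasDerivAt_P y) (hasDerivAt_a y)
  rw [h, θ₂_eq]
  ring

/-- Divergence of the shear vector: `-κ Δ²W₀`. -/
lemma divShear_eq (t x y : ℝ) : divShear (w t) θ₁ θ₂ x y =
    -(2 * t ^ 2 / (5 * (1 - ν))) * (12 * b x * P y + 12 * a x * a y + 12 * P x * b y) := by
  unfold divShear
  simp only [shear₁, shear₂]
  have h₁ : pdx (fun x y => -(2 * t ^ 2 / (5 * (1 - ν))) * (d x * P y + 3 * p x * a y)) x y = _ :=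
    deriv_comb (-(2 * t ^ 2 / (5 * (1 - ν))) * P y) (-(2 * t ^ 2 / (5 * (1 - ν))) * 3 * a y)
      (fun r => by ring) (hasDerivAt_d x) (hasDerivAt_p x)
  have h₂ : pdy (fun x y => -(2 * t ^ 2 / (5 * (1 - ν))) * (3 * a x * p y + P x * d y)) x y = _ :=
    deriv_comb (-(2 * t ^ 2 / (5 * (1 - ν))) * 3 * a x) (-(2 * t ^ 2 / (5 * (1 - ν))) * P x)
      (fun r => by ring) (hasDerivAt_p y) (hasDerivAt_d y)
  rw [h₁, h₂]
  ring

/-- The relation `λ / (5(1-ν)) = D` between the material constants; the powers of `t` cancel. -/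
lemma lam_mul_eq {t : ℝ} (ht : t ≠ 0) :
    lam * t⁻¹ ^ 2 * (2 * t ^ 2 / (5 * (1 - ν))) = 2 * Dc := by
  simp only [lam, Dc, ν]
  field_simp
  norm_num
  ring

lemma g_eq (x y : ℝ) :
    g x y = 2 * Dc * (12 * b x * P y + 12 * a x * a y + 12 * P x * b y) := by
  simp only [g, Dc, a, b, P]
  ring

lemma endpoint_vanish {s : ℝ} (hs : s = 0 ∨ s = 1) : P s = 0 ∧ p s = 0 ∧ a s = 0 := by
  rcases hs with rfl | rfl <;> simp [P, p, a]

lemma frontier_square {x y : ℝ} (h : (x, y) ∈ frontier (Icc (0 : ℝ) 1 ×ˢ Icc (0 : ℝ) 1)) :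
    (x = 0 ∨ x = 1) ∨ (y = 0 ∨ y = 1) := by
  rw [frontier_prod_eq, frontier_Icc zero_le_one] at h
  rcases h with h | h
  · exact Or.inr h.2
  · exact Or.inl h.1

end ReissnerMindlin

open ReissnerMindlin

/-- (θ, w) is a classical solution of the clamped Reissner–Mindlin
plate system on the unit square Ω = (0,1)²: both PDEs hold at every interior
point, and θ and w vanish on the boundary of [0,1]². -/
theorem reissner_mindlin_square_solution (t : ℝ) (ht : 0 < t) :
    (∀ x y : ℝ, (x, y) ∈ Ioo (0 : ℝ) 1 ×ˢ Ioo (0 : ℝ) 1 →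
      -(divCeps₁ θ₁ θ₂ x y) - lam * t⁻¹ ^ 2 * (pdx (w t) x y - θ₁ x y) = 0 ∧
      -(divCeps₂ θ₁ θ₂ x y) - lam * t⁻¹ ^ 2 * (pdy (w t) x y - θ₂ x y) = 0 ∧
      -(lam * t⁻¹ ^ 2) * divShear (w t) θ₁ θ₂ x y = g x y) ∧
    (∀ x y : ℝ, (x, y) ∈ frontier (Icc (0 : ℝ) 1 ×ˢ Icc (0 : ℝ) 1) →
      θ₁ x y = 0 ∧ θ₂ x y = 0 ∧ w t x y = 0) := by
  have hc := lam_mul_eq ht.ne'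
  refine ⟨fun x y _ => ⟨?_, ?_, ?_⟩, fun x y hxy => ?_⟩
  · rw [divCeps₁_eq, shear₁]
    linear_combination (d x * P y + 3 * p x * a y) * hc
  · rw [divCeps₂_eq, shear₂]
    linear_combination (3 * a x * p y + P x * d y) * hc
  · rw [divShear_eq, g_eq]
    linear_combination (12 * b x * P y + 12 * a x * a y + 12 * P x * b y) * hc
  · rw [θ₁_eq, θ₂_eq, w_eq]
    rcases frontier_square hxy with h | h <;>
    · obtain ⟨h₁, h₂, h₃⟩ := endpoint_vanish h
      simp [h₁, h₂, h₃]
end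
end

section
/- For every (x,y) ∈ ℝ², the first Reissner–Mindlin equation holds for the pair (θ, w): −∇·(C ε(θ))(x,y) − λ t⁻² (∇w(x,y) − θ(x,y)) = 0. -/
/-!
The rotation is a gradient field: with `p s = s³(s-1)³`, `q = p'/3` and `r = q'/2`, one has
`θ = ∇φ` for `φ(x, y) = p(x) p(y) / 3`. Hence `∇·(C ε(θ)) = D ∇Δφ`, and
`Δφ = 2 (p(y) r(x) + p(x) r(y))`. The displacement is `w = φ - (2t²/(5(1-ν))) Δφ / 2`, so
`∇w - θ = -(t²/(5(1-ν))) ∇Δφ`, and the two terms of the equation cancel because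
`λ / (5(1-ν)) = D`. All derivatives reduce to the three one-variable lemmas
`hasDerivAt_pp`, `hasDerivAt_qq` and `hasDerivAt_rr`.
-/

noncomputable section

open Set

/-- The polynomial `s³(s-1)³`; the potential of `θ` is `p(x) p(y) / 3`. -/
def pp (s : ℝ) : ℝ := s ^ 3 * (s - 1) ^ 3

/-- One third of the derivative of `pp`. -/
def qq (s : ℝ) : ℝ := s ^ 2 * (s - 1) ^ 2 * (2 * s - 1)

/-- One half of the derivative of `qq`. -/
def rr (s : ℝ) : ℝ := s * (s - 1) * (5 * s ^ 2 - 5 * s + 1)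

/-- The derivative of `rr`. -/
def rr' (s : ℝ) : ℝ := 20 * s ^ 3 - 30 * s ^ 2 + 12 * s - 1

lemma hasDerivAt_pp (s : ℝ) : HasDerivAt pp (3 * qq s) s := by
  have h1 := (hasDerivAt_id' s).sub_const 1
  exact (((hasDerivAt_id' s).pow 3).mul (h1.pow 3)).congr_deriv (by simp [qq]; ring)

lemma hasDerivAt_qq (s : ℝ) : HasDerivAt qq (2 * rr s) s := by
  have h0 := hasDerivAt_id' s
  have h1 := h0.sub_const 1
  exact (((h0.pow 2).mul (h1.pow 2)).mul ((h0.const_mul 2).sub_const 1)).congr_deriv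
    (by simp [rr]; ring)

lemma hasDerivAt_rr (s : ℝ) : HasDerivAt rr (rr' s) s := by
  have h0 := hasDerivAt_id' s
  have h1 := h0.sub_const 1
  exact ((h0.mul h1).mul ((((h0.pow 2).const_mul 5).sub (h0.const_mul 5)).add_const 1)).congr_deriv
    (by simp [rr']; ring)

lemma θ₁_eq : θ₁ = fun x y => pp y * qq x := by
  funext x y; simp only [θ₁, pp, qq]; ring

lemma θ₂_eq : θ₂ = fun x y => pp x * qq y := by
  funext x y; simp only [θ₂, pp, qq]; ring

lemma w_eq (t : ℝ) : w t = fun x y =>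
    1 / 3 * (pp x * pp y) - 2 * t ^ 2 / (5 * (1 - ν)) * (pp y * rr x + pp x * rr y) := by
  funext x y; simp only [w, pp, rr]; ring

lemma pdx_θ₁ (x y : ℝ) : pdx θ₁ x y = pp y * (2 * rr x) := by
  rw [θ₁_eq]; exact ((hasDerivAt_qq x).const_mul (pp y)).deriv

lemma pdy_θ₁ (x y : ℝ) : pdy θ₁ x y = 3 * qq y * qq x := by
  rw [θ₁_eq]; exact ((hasDerivAt_pp y).mul_const (qq x)).deriv

lemma pdx_θ₂ (x y : ℝ) : pdx θ₂ x y = 3 * qq x * qq y := by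
  rw [θ₂_eq]; exact ((hasDerivAt_pp x).mul_const (qq y)).deriv

lemma pdy_θ₂ (x y : ℝ) : pdy θ₂ x y = pp x * (2 * rr y) := by
  rw [θ₂_eq]; exact ((hasDerivAt_qq y).const_mul (pp x)).deriv

lemma pdx_w (t x y : ℝ) : pdx (w t) x y = pp y * qq x
    - 2 * t ^ 2 / (5 * (1 - ν)) * (pp y * rr' x + 3 * qq x * rr y) := by
  rw [w_eq]
  refine ((((hasDerivAt_pp x).mul_const (pp y)).const_mul (1 / 3)).sub
    ((((hasDerivAt_rr x).const_mul (pp y)).add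
      ((hasDerivAt_pp x).mul_const (rr y))).const_mul _)).deriv.trans ?_
  ring

lemma pdy_w (t x y : ℝ) : pdy (w t) x y = pp x * qq y
    - 2 * t ^ 2 / (5 * (1 - ν)) * (pp x * rr' y + 3 * qq y * rr x) := by
  rw [w_eq]
  refine ((((hasDerivAt_pp y).const_mul (pp x)).const_mul (1 / 3)).sub
    ((((hasDerivAt_pp y).mul_const (rr x)).add
      ((hasDerivAt_rr y).const_mul (pp x))).const_mul _)).deriv.trans ?_
  ring

/-- First component of `∇·(C ε(θ)) = D ∇Δφ`. -/
lemma divCeps₁_θ (x y : ℝ) :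
    divCeps₁ θ₁ θ₂ x y = Dc * (2 * (pp y * rr' x + 3 * qq x * rr y)) := by
  simp only [divCeps₁, pdx_θ₁, pdy_θ₁, pdx_θ₂, pdy_θ₂]
  have hr := ((hasDerivAt_rr x).const_mul 2).const_mul (pp y)
  have hx := (((hr.const_mul (1 - ν)).add
    ((hr.add ((hasDerivAt_pp x).mul_const (2 * rr y))).const_mul ν)).const_mul Dc).deriv
  have hy := ((((((hasDerivAt_qq y).const_mul 3).mul_const (qq x)).add
    ((hasDerivAt_qq y).const_mul (3 * qq x))).div_const 2).const_mul (1 - ν)).const_mul Dc |>.deriv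
  refine (congrArg₂ (· + ·) hx hy).trans ?_
  ring

/-- Second component of `∇·(C ε(θ)) = D ∇Δφ`. -/
lemma divCeps₂_θ (x y : ℝ) :
    divCeps₂ θ₁ θ₂ x y = Dc * (2 * (pp x * rr' y + 3 * qq y * rr x)) := by
  simp only [divCeps₂, pdx_θ₁, pdy_θ₁, pdx_θ₂, pdy_θ₂]
  have hr := ((hasDerivAt_rr y).const_mul 2).const_mul (pp x)
  have hy := (((hr.const_mul (1 - ν)).add
    ((((hasDerivAt_pp y).mul_const (2 * rr x)).add hr).const_mul ν)).const_mul Dc).deriv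
  have hx := ((((((hasDerivAt_qq x).const_mul (3 * qq y)).add
    (((hasDerivAt_qq x).const_mul 3).mul_const (qq y))).div_const 2).const_mul (1 - ν)).const_mul
      Dc).deriv
  refine (congrArg₂ (· + ·) hx hy).trans ?_
  ring

/-- The compatibility of the shear and bending moduli with the coefficient of `Δφ` in `w`. -/
lemma lam_mul (t : ℝ) (ht : 0 < t) :
    lam * t⁻¹ ^ 2 * (2 * t ^ 2 / (5 * (1 - ν))) = 2 * Dc := by
  have h : t ≠ 0 := ht.ne'
  simp only [lam, Dc, E, ν]
  field_simp
  norm_num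

/-- the first Reissner–Mindlin equation
−∇·(C ε(θ)) − λ t⁻² (∇w − θ) = 0 holds at every point of ℝ². -/
theorem reissner_mindlin_square_first_equation (t : ℝ) (ht : 0 < t) :
    ∀ x y : ℝ,
      -(divCeps₁ θ₁ θ₂ x y) - lam * t⁻¹ ^ 2 * (pdx (w t) x y - θ₁ x y) = 0 ∧
      -(divCeps₂ θ₁ θ₂ x y) - lam * t⁻¹ ^ 2 * (pdy (w t) x y - θ₂ x y) = 0 := by
  intro x y
  have hl := lam_mul t ht
  rw [divCeps₁_θ, divCeps₂_θ, pdx_w, pdy_w, θ₁_eq, θ₂_eq]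
  constructor
  · linear_combination (pp y * rr' x + 3 * qq x * rr y) * hl
  · linear_combination (pp x * rr' y + 3 * qq y * rr x) * hl
end
end

section
/- Let Ω ⊆ ℝ² be a nonempty open connected set and let θ : Ω → ℝ² be twice continuously differentiable with ε(θ)(x,y) = 0 for all (x,y) ∈ Ω. Then θ is a rigid displacement: there exist a ∈ ℝ² and c ∈ ℝ such that θ(x,y) = a + c(−y, x) for all (x,y) ∈ Ω. -/
/-!
The vanishing of the symmetric gradient says that on `Ω` the differentials are `dθ₁ = -w dy` and
`dθ₂ = w dx`, where `w = ∂θ₂/∂x`. If `df = w L` for a fixed linear form `L` and `f` is `C²`, the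
symmetry of second derivatives gives `dw ∧ L = 0` (`fderiv_mul_symm_of_fderiv_eq_smul`). Applied to
`θ₁` and `θ₂` this yields `∂w/∂x = 0` and `∂w/∂y = 0`, so `w` is a constant `c` on the connected
set `Ω`. Then `θ₁ + c y` and `θ₂ - c x` have zero differential, hence are constant too.
-/

noncomputable section

/-- If the differential of a `C²` function is `w • L` with `L` a fixed linear form, then
`dw ∧ L = 0`, by the symmetry of the second derivative. -/
theorem fderiv_mul_symm_of_fderiv_eq_smul {Ω : Set (ℝ × ℝ)} (hopen : IsOpen Ω)
    {f w : ℝ × ℝ → ℝ} {L : ℝ × ℝ →L[ℝ] ℝ} (hf : ContDiffOn ℝ 2 f Ω)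
    (hw : DifferentiableOn ℝ w Ω) (hfw : ∀ p ∈ Ω, fderiv ℝ f p = w p • L)
    {p : ℝ × ℝ} (hp : p ∈ Ω) (u v : ℝ × ℝ) :
    fderiv ℝ w p u * L v = fderiv ℝ w p v * L u := by
  have hn : Ω ∈ nhds p := hopen.mem_nhds hp
  have hev : fderiv ℝ f =ᶠ[nhds p] fun q => w q • L :=
    Filter.eventually_of_mem hn hfw
  have hD : fderiv ℝ (fderiv ℝ f) p = (fderiv ℝ w p).smulRight L := by
    rw [hev.fderiv_eq]
    exact ((hw.differentiableAt hn).hasFDerivAt.smul_const L).fderiv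
  have hs : IsSymmSndFDerivAt ℝ f p := (hf.contDiffAt hn).isSymmSndFDerivAt (by simp)
  simpa [hD] using hs.eq u v

/-- A linear form on `ℝ × ℝ` is determined by its values on the two basis vectors. -/
theorem clm_prod_ext {A B : ℝ × ℝ →L[ℝ] ℝ} (h₁ : A (1, 0) = B (1, 0))
    (h₂ : A (0, 1) = B (0, 1)) : A = B := by
  ext <;> simpa

theorem fderiv_apply_eq_pdx {f : ℝ → ℝ → ℝ} {x y : ℝ}
    (hf : DifferentiableAt ℝ (fun p : ℝ × ℝ => f p.1 p.2) (x, y)) :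
    fderiv ℝ (fun p : ℝ × ℝ => f p.1 p.2) (x, y) (1, 0) = pdx f x y := by
  have h : HasDerivAt (fun s : ℝ => (s, y)) ((1 : ℝ), (0 : ℝ)) x :=
    (hasDerivAt_id x).prodMk (hasDerivAt_const x y)
  exact (hf.hasFDerivAt.comp_hasDerivAt x h).deriv.symm

theorem fderiv_apply_eq_pdy {f : ℝ → ℝ → ℝ} {x y : ℝ}
    (hf : DifferentiableAt ℝ (fun p : ℝ × ℝ => f p.1 p.2) (x, y)) :
    fderiv ℝ (fun p : ℝ × ℝ => f p.1 p.2) (x, y) (0, 1) = pdy f x y := by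
  have h : HasDerivAt (fun s : ℝ => (x, s)) ((0 : ℝ), (1 : ℝ)) y :=
    (hasDerivAt_const y x).prodMk (hasDerivAt_id y)
  exact (hf.hasFDerivAt.comp_hasDerivAt y h).deriv.symm

/-- On a connected open set, a function with constant differential `L` is `L` plus a constant. -/
theorem exists_eq_add_of_fderiv_eq_const {Ω : Set (ℝ × ℝ)} (hopen : IsOpen Ω)
    (hconn : IsPreconnected Ω) {f : ℝ × ℝ → ℝ} {L : ℝ × ℝ →L[ℝ] ℝ}
    (hf : DifferentiableOn ℝ f Ω) (hL : ∀ p ∈ Ω, fderiv ℝ f p = L) :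
    ∃ a, ∀ p ∈ Ω, f p = a + L p := by
  obtain ⟨a, ha⟩ := hopen.exists_eq_add_of_fderiv_eq hconn hf L.differentiableOn
    (fun p hp => by rw [hL p hp, L.fderiv])
  exact ⟨a, fun p hp => by rw [ha hp, add_comm]⟩

/-- a twice continuously differentiable vector field on a
nonempty open connected set Ω ⊆ ℝ² whose symmetric gradient
ε(θ) = (∇θ + ∇θᵀ)/2 vanishes on Ω is a rigid displacement:
θ(x,y) = a + c(−y, x) on Ω. -/
theorem symmetric_gradient_zero_implies_rigid
    (Ω : Set (ℝ × ℝ)) (hne : Ω.Nonempty) (hopen : IsOpen Ω) (hconn : IsConnected Ω)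
    (θ₁ θ₂ : ℝ → ℝ → ℝ)
    (hsmooth : ContDiffOn ℝ 2 (fun p : ℝ × ℝ => (θ₁ p.1 p.2, θ₂ p.1 p.2)) Ω)
    (heps : ∀ x y : ℝ, (x, y) ∈ Ω →
      pdx θ₁ x y = 0 ∧ pdy θ₂ x y = 0 ∧ (pdy θ₁ x y + pdx θ₂ x y) / 2 = 0) :
    ∃ a₁ a₂ c : ℝ, ∀ x y : ℝ, (x, y) ∈ Ω →
      θ₁ x y = a₁ + c * (-y) ∧ θ₂ x y = a₂ + c * x := by
  set f₁ : ℝ × ℝ → ℝ := fun p => θ₁ p.1 p.2 with hf₁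
  set f₂ : ℝ × ℝ → ℝ := fun p => θ₂ p.1 p.2 with hf₂
  have hc₁ : ContDiffOn ℝ 2 f₁ Ω := hsmooth.fst
  have hc₂ : ContDiffOn ℝ 2 f₂ Ω := hsmooth.snd
  have hd₁ : DifferentiableOn ℝ f₁ Ω := hc₁.differentiableOn (by norm_num)
  have hd₂ : DifferentiableOn ℝ f₂ Ω := hc₂.differentiableOn (by norm_num)
  let w : ℝ × ℝ → ℝ := fun p => fderiv ℝ f₂ p (1, 0)
  have hw : DifferentiableOn ℝ w Ω :=
    ((hc₂.fderiv_of_isOpen (m := 1) hopen (by norm_num)).differentiableOn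
      (by norm_num)).clm_apply (differentiableOn_const _)
  have hg₁ : ∀ p ∈ Ω, fderiv ℝ f₁ p = (-w p) • ContinuousLinearMap.snd ℝ ℝ ℝ := by
    rintro ⟨x, y⟩ hp
    have e₁ := fderiv_apply_eq_pdx (hd₁.differentiableAt (hopen.mem_nhds hp))
    have e₂ := fderiv_apply_eq_pdy (hd₁.differentiableAt (hopen.mem_nhds hp))
    have e₃ : w (x, y) = _ := fderiv_apply_eq_pdx (hd₂.differentiableAt (hopen.mem_nhds hp))
    obtain ⟨h₁, -, h₃⟩ := heps x y hp
    apply clm_prod_ext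
    · rw [e₁, h₁]; simp
    · rw [e₂, e₃]
      simp only [smul_apply, ContinuousLinearMap.coe_snd', smul_eq_mul]
      linarith
  have hg₂ : ∀ p ∈ Ω, fderiv ℝ f₂ p = w p • ContinuousLinearMap.fst ℝ ℝ ℝ := by
    rintro ⟨x, y⟩ hp
    have e₂ := fderiv_apply_eq_pdy (hd₂.differentiableAt (hopen.mem_nhds hp))
    obtain ⟨-, h₂, -⟩ := heps x y hp
    apply clm_prod_ext
    · simp [w]
    · rw [e₂, h₂]; simp
  have hw0 : ∀ p ∈ Ω, fderiv ℝ w p = 0 := by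
    intro p hp
    have k₁ := fderiv_mul_symm_of_fderiv_eq_smul hopen hc₁ hw.neg hg₁ hp (1, 0) (0, 1)
    have k₂ := fderiv_mul_symm_of_fderiv_eq_smul hopen hc₂ hw hg₂ hp (1, 0) (0, 1)
    rw [fderiv_neg] at k₁
    apply clm_prod_ext
    · simpa using k₁
    · simpa using k₂.symm
  obtain ⟨c, hc⟩ := hopen.exists_is_const_of_fderiv_eq_zero hconn.isPreconnected hw hw0
  obtain ⟨a₁, ha₁⟩ := exists_eq_add_of_fderiv_eq_const hopen hconn.isPreconnected hd₁
    (fun p hp => by rw [hg₁ p hp, hc p hp])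
  obtain ⟨a₂, ha₂⟩ := exists_eq_add_of_fderiv_eq_const hopen hconn.isPreconnected hd₂
    (fun p hp => by rw [hg₂ p hp, hc p hp])
  refine ⟨a₁, a₂, c, fun x y hp => ⟨?_, ?_⟩⟩
  · simpa [hf₁] using ha₁ _ hp
  · simpa [hf₂] using ha₂ _ hp
end
end

section
/- Let Ω ⊆ ℝ² be a nonempty bounded open connected set, and let θ be a continuous vector field on the closure of Ω that is twice continuously differentiable on Ω with ε(θ)(x,y) = 0 for all (x,y) ∈ Ω and θ(x,y) = (0,0) for all (x,y) on the topological boundary of Ω. Then θ vanishes identically on the closure of Ω. -/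
/-!
The diagonal entries of `ε(θ) = 0` say that `θ₁` has zero derivative along horizontal lines and
`θ₂` along vertical lines. Starting at a point of `Ω` and moving along such a line, one leaves
the bounded set `Ω`, and the first exit point lies on `frontier Ω`. The component of `θ` in
question is constant up to that point and vanishes there, hence it vanishes at the starting point.
This is `eq_zero_of_curve_exits`, applied once to each component.
-/

noncomputable section

/-- A function that is constant along a curve inside an open set `Ω`, continuous up to the boundary
and zero on the boundary vanishes at every point from which the curve later leaves `Ω`. -/
lemma eq_zero_of_curve_exits {Ω : Set (ℝ × ℝ)} (hopen : IsOpen Ω) {g : ℝ × ℝ → ℝ}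
    (hg : ContinuousOn g (closure Ω)) (hzero : ∀ p ∈ frontier Ω, g p = 0)
    {γ : ℝ → ℝ × ℝ} (hγ : Continuous γ)
    (hderiv : ∀ t, γ t ∈ Ω → HasDerivAt (fun s => g (γ s)) 0 t)
    {a T : ℝ} (ha : γ a ∈ Ω) (haT : a ≤ T) (hT : γ T ∉ Ω) : g (γ a) = 0 := by
  let S : Set ℝ := Set.Ici a ∩ γ ⁻¹' Ωᶜ
  have hSclosed : IsClosed S := isClosed_Ici.inter (hopen.isClosed_compl.preimage hγ)
  have hSbdd : BddBelow S := ⟨a, fun t ht => ht.1⟩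
  -- `sInf S` is the first exit time.
  have hmem : sInf S ∈ S := hSclosed.csInf_mem ⟨T, haT, hT⟩ hSbdd
  set b := sInf S
  have hab : a < b := lt_of_le_of_ne hmem.1 fun h => hmem.2 (h ▸ ha)
  have hin : ∀ t ∈ Set.Ico a b, γ t ∈ Ω := fun t ht => by
    by_contra hn
    exact absurd (csInf_le hSbdd (show t ∈ S from ⟨ht.1, hn⟩)) (not_le.mpr ht.2)
  have hcl : Set.MapsTo γ (Set.Icc a b) (closure Ω) := by
    rw [← closure_Ico hab.ne]
    exact Set.MapsTo.closure hin hγ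
  have hconst := constant_of_has_deriv_right_zero (hg.comp hγ.continuousOn hcl)
    (fun t ht => (hderiv t (hin t ht)).hasDerivWithinAt) b ⟨hab.le, le_rfl⟩
  have hfr : γ b ∈ frontier Ω := by
    rw [hopen.frontier_eq]
    exact ⟨hcl ⟨hab.le, le_rfl⟩, hmem.2⟩
  exact hconst.symm.trans (hzero _ hfr)

/-- a vector field that is continuous on the closure of a
nonempty bounded open connected set Ω ⊆ ℝ², twice continuously differentiable
on Ω with vanishing symmetric gradient ε(θ) = (∇θ + ∇θᵀ)/2 on Ω, and vanishing
on the topological boundary of Ω, vanishes identically on the closure of Ω. -/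
theorem symmetric_gradient_zero_with_zero_boundary_implies_zero
    (Ω : Set (ℝ × ℝ)) (hne : Ω.Nonempty) (hopen : IsOpen Ω) (hconn : IsConnected Ω)
    (hbdd : Bornology.IsBounded Ω)
    (θ₁ θ₂ : ℝ → ℝ → ℝ)
    (hcont : ContinuousOn (fun p : ℝ × ℝ => (θ₁ p.1 p.2, θ₂ p.1 p.2)) (closure Ω))
    (hsmooth : ContDiffOn ℝ 2 (fun p : ℝ × ℝ => (θ₁ p.1 p.2, θ₂ p.1 p.2)) Ω)
    (heps : ∀ x y : ℝ, (x, y) ∈ Ω →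
      pdx θ₁ x y = 0 ∧ pdy θ₂ x y = 0 ∧ (pdy θ₁ x y + pdx θ₂ x y) / 2 = 0)
    (hbc : ∀ x y : ℝ, (x, y) ∈ frontier Ω → θ₁ x y = 0 ∧ θ₂ x y = 0) :
    ∀ x y : ℝ, (x, y) ∈ closure Ω → θ₁ x y = 0 ∧ θ₂ x y = 0 := by
  obtain ⟨R, hR⟩ := hbdd.exists_norm_le
  have hdiff : ∀ p ∈ Ω, DifferentiableAt ℝ (fun p : ℝ × ℝ => (θ₁ p.1 p.2, θ₂ p.1 p.2)) p :=
    fun p hp => (hsmooth.contDiffAt (hopen.mem_nhds hp)).differentiableAt (by norm_num)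
  have key : ∀ x y : ℝ, (x, y) ∈ Ω → θ₁ x y = 0 ∧ θ₂ x y = 0 := by
    intro x y hxy
    constructor
    · refine eq_zero_of_curve_exits hopen (g := fun p => θ₁ p.1 p.2) hcont.fst
        (fun p hp => (hbc p.1 p.2 hp).1) (γ := fun t => (t, y)) (by fun_prop) ?_ hxy
        (le_max_left x (R + 1)) ?_
      · intro t ht
        have hd : DifferentiableAt ℝ (fun s => θ₁ s y) t :=
          (hdiff (t, y) ht).fst.comp t (f := fun s : ℝ => (s, y)) (by fun_prop)
        have h0 : deriv (fun s => θ₁ s y) t = 0 := (heps t y ht).1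
        exact h0 ▸ hd.hasDerivAt
      · intro h
        have h1 := (le_abs_self _).trans ((norm_fst_le _).trans (hR _ h))
        have h2 := le_max_right x (R + 1)
        dsimp only at h1
        linarith
    · refine eq_zero_of_curve_exits hopen (g := fun p => θ₂ p.1 p.2) hcont.snd
        (fun p hp => (hbc p.1 p.2 hp).2) (γ := fun t => (x, t)) (by fun_prop) ?_ hxy
        (le_max_left y (R + 1)) ?_
      · intro t ht
        have hd : DifferentiableAt ℝ (fun s => θ₂ x s) t :=
          (hdiff (x, t) ht).snd.comp t (f := fun s : ℝ => (x, s)) (by fun_prop)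
        have h0 : deriv (fun s => θ₂ x s) t = 0 := (heps x t ht).2.1
        exact h0 ▸ hd.hasDerivAt
      · intro h
        have h1 := (le_abs_self _).trans ((norm_snd_le _).trans (hR _ h))
        have h2 := le_max_right y (R + 1)
        dsimp only at h1
        linarith
  intro x y hxy
  by_cases h : (x, y) ∈ Ω
  · exact key x y h
  · exact hbc x y (by rw [hopen.frontier_eq]; exact ⟨hxy, h⟩)
end
end

section
/- For every natural number k there exists a constant C > 0, depending only on k, such that for every h > 0 and every polynomial function p : ℝ² → ℝ of total degree at most k, ∫_{∂(hT̂)} p² dH¹ ≤ C h⁻¹ ∫_{hT̂} p² dx, where the boundary integral is taken with respect to the one-dimensional Hausdorff measure. -/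
/-!
The inequality is a statement about equivalence of norms plus scaling. On the reference triangle,
restriction maps the finite-dimensional space of polynomials of degree at most `k` into `L²` of the
triangle, and this map is injective because a polynomial vanishing almost everywhere on a nonempty
open set is zero (`polyToL2_injective`). Restriction to the boundary is therefore a linear map from
a finite-dimensional subspace of `L²` of the triangle to `L²` of the boundary, hence bounded
(`trace_inequality_unitTriangle`); it is well defined because the boundary lies in three segments
and so has finite length. Dilating by `h` multiplies lengths by `h` and areas by `h ^ 2` and
preserves the space of polynomials of degree at most `k`, which yields the factor `h⁻¹`.
-/

noncomputable section

open MeasureTheory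
open scoped Pointwise

/-- The open unit triangle with vertices (0,0), (1,0), (0,1). -/
def unitTriangle : Set (EuclideanSpace ℝ (Fin 2)) :=
  {v | 0 < v 0 ∧ 0 < v 1 ∧ v 0 + v 1 < 1}

/-- The linear map sending a polynomial of degree at most `k` to its class in `L²(μ)`, for a measure
`μ` against which every polynomial is square-integrable. -/
def polyToL2 (k : ℕ) (μ : Measure (EuclideanSpace ℝ (Fin 2)))
    (hμ : ∀ P : MvPolynomial (Fin 2) ℝ,
      MemLp (fun z : EuclideanSpace ℝ (Fin 2) => MvPolynomial.eval (fun i => z i) P) 2 μ) :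
    MvPolynomial.restrictTotalDegree (Fin 2) ℝ k →ₗ[ℝ] Lp ℝ 2 μ where
  toFun P := (hμ P.1).toLp _
  map_add' P Q := by
    rw [← MemLp.toLp_add (hμ P.1) (hμ Q.1)]
    exact MemLp.toLp_congr _ _ (.of_forall fun z => by simp)
  map_smul' c P := by
    rw [RingHom.id_apply, ← MemLp.toLp_const_smul c (hμ P.1)]
    exact MemLp.toLp_congr _ _ (.of_forall fun z => by simp)

lemma continuous_eval (P : MvPolynomial (Fin 2) ℝ) :
    Continuous fun z : EuclideanSpace ℝ (Fin 2) => MvPolynomial.eval (fun i => z i) P :=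
  (MvPolynomial.continuous_eval P).comp (by fun_prop)

lemma norm_polyToL2_sq (k : ℕ) (μ : Measure (EuclideanSpace ℝ (Fin 2)))
    (hμ : ∀ P : MvPolynomial (Fin 2) ℝ,
      MemLp (fun z : EuclideanSpace ℝ (Fin 2) => MvPolynomial.eval (fun i => z i) P) 2 μ)
    (P : MvPolynomial.restrictTotalDegree (Fin 2) ℝ k) :
    ‖polyToL2 k μ hμ P‖ ^ 2 = ∫ z, (MvPolynomial.eval (fun i => z i) P.1) ^ 2 ∂μ := by
  rw [← real_inner_self_eq_norm_sq, L2.inner_def]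
  refine integral_congr_ae ?_
  filter_upwards [(hμ P.1).coeFn_toLp] with z hz
  rw [show (polyToL2 k μ hμ P : EuclideanSpace ℝ (Fin 2) → ℝ) z = _ from hz]
  simp [sq]

lemma memLp_eval {μ : Measure (EuclideanSpace ℝ (Fin 2))} {S K : Set (EuclideanSpace ℝ (Fin 2))}
    (hK : IsCompact K) (hSK : S ⊆ K) (hS : MeasurableSet S) (hfin : μ S < ⊤)
    (P : MvPolynomial (Fin 2) ℝ) :
    MemLp (fun z : EuclideanSpace ℝ (Fin 2) => MvPolynomial.eval (fun i => z i) P) 2 (μ.restrict S) := by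
  have : IsFiniteMeasure (μ.restrict S) := ⟨by simpa using hfin⟩
  obtain ⟨C, hC⟩ := hK.exists_bound_of_continuousOn (continuous_eval P).continuousOn
  exact MemLp.of_bound (continuous_eval P).aestronglyMeasurable C
    ((ae_restrict_mem hS).mono fun z hz => hC z (hSK hz))

lemma isOpen_unitTriangle : IsOpen unitTriangle := by
  have h0 : Continuous fun z : EuclideanSpace ℝ (Fin 2) => z 0 := by fun_prop
  have h1 : Continuous fun z : EuclideanSpace ℝ (Fin 2) => z 1 := by fun_prop
  exact (isOpen_lt continuous_const h0).inter
    ((isOpen_lt continuous_const h1).inter (isOpen_lt (h0.add h1) continuous_const))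

lemma closure_unitTriangle_subset :
    closure unitTriangle ⊆ {v | 0 ≤ v 0 ∧ 0 ≤ v 1 ∧ v 0 + v 1 ≤ 1} := by
  have h0 : Continuous fun z : EuclideanSpace ℝ (Fin 2) => z 0 := by fun_prop
  have h1 : Continuous fun z : EuclideanSpace ℝ (Fin 2) => z 1 := by fun_prop
  refine closure_minimal (fun v hv => ⟨hv.1.le, hv.2.1.le, hv.2.2.le⟩) ?_
  exact (isClosed_le continuous_const h0).inter
    ((isClosed_le continuous_const h1).inter (isClosed_le (h0.add h1) continuous_const))

lemma isCompact_closure_unitTriangle : IsCompact (closure unitTriangle) := by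
  refine Metric.isCompact_of_isClosed_isBounded isClosed_closure
    ((Metric.isBounded_closedBall (x := 0) (r := 2)).subset fun v hv => ?_)
  obtain ⟨h0, h1, h2⟩ := closure_unitTriangle_subset hv
  rw [mem_closedBall_zero_iff, EuclideanSpace.norm_eq, Real.sqrt_le_left (by norm_num)]
  simp only [Fin.sum_univ_two, Real.norm_eq_abs, sq_abs]
  nlinarith

lemma frontier_unitTriangle_subset :
    frontier unitTriangle ⊆ segment ℝ !₂[(0 : ℝ), 0] !₂[(1 : ℝ), 0] ∪
      segment ℝ !₂[(0 : ℝ), 0] !₂[(0 : ℝ), 1] ∪ segment ℝ !₂[(1 : ℝ), 0] !₂[(0 : ℝ), 1] := by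
  intro v hv
  rw [isOpen_unitTriangle.frontier_eq] at hv
  obtain ⟨h0, h1, h2⟩ := closure_unitTriangle_subset hv.1
  have hcases : v 1 = 0 ∨ v 0 = 0 ∨ v 0 + v 1 = 1 := by
    by_contra! hne
    exact hv.2 ⟨h0.lt_of_ne hne.2.1.symm, h1.lt_of_ne hne.1.symm, h2.lt_of_ne hne.2.2⟩
  rcases hcases with h | h | h
  · refine .inl (.inl ⟨1 - v 0, v 0, by linarith, h0, by ring, ?_⟩)
    ext i; fin_cases i <;> simp [h]
  · refine .inl (.inr ⟨1 - v 1, v 1, by linarith, h1, by ring, ?_⟩)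
    ext i; fin_cases i <;> simp [h]
  · refine .inr ⟨v 0, v 1, h0, h1, h, ?_⟩
    ext i; fin_cases i <;> simp

lemma hausdorffMeasure_frontier_lt_top : μH[1] (frontier unitTriangle) < ⊤ := by
  refine (measure_mono frontier_unitTriangle_subset).trans_lt ?_
  simp only [measure_union_lt_top_iff, hausdorffMeasure_segment, edist_lt_top, and_self]

lemma polyToL2_injective (k : ℕ)
    (hμ : ∀ P : MvPolynomial (Fin 2) ℝ,
      MemLp (fun z : EuclideanSpace ℝ (Fin 2) => MvPolynomial.eval (fun i => z i) P) 2 (volume.restrict unitTriangle)) :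
    Function.Injective (polyToL2 k (volume.restrict unitTriangle) hμ) := by
  intro P Q hPQ
  have hae := (MemLp.toLp_eq_toLp_iff (hμ P.1) (hμ Q.1)).1 hPQ
  have heq := Measure.eqOn_open_of_ae_eq hae isOpen_unitTriangle
    (continuous_eval _).continuousOn (continuous_eval _).continuousOn
  refine Subtype.ext (MvPolynomial.funext_set (fun _ => Set.Ioo (0 : ℝ) (1 / 2))
    (fun _ => Set.Ioo_infinite (by norm_num)) fun x hx => ?_)
  have h0 := hx 0 trivial
  have h1 := hx 1 trivial
  exact heq (x := WithLp.toLp 2 x) ⟨h0.1, h1.1, by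
    change x 0 + x 1 < 1
    linarith [h0.2, h1.2]⟩

/-- The inequality on the reference triangle, with `h = 1`. -/
lemma trace_inequality_unitTriangle (k : ℕ) :
    ∃ C : ℝ, 0 < C ∧ ∀ P : MvPolynomial (Fin 2) ℝ, P.totalDegree ≤ k →
      ∫ z in frontier unitTriangle, (MvPolynomial.eval (fun i => z i) P) ^ 2 ∂(μH[1]) ≤
        C * ∫ z in unitTriangle, (MvPolynomial.eval (fun i => z i) P) ^ 2 := by
  have hT := memLp_eval (μ := volume) isCompact_closure_unitTriangle subset_closure
    isOpen_unitTriangle.measurableSet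
    ((measure_mono subset_closure).trans_lt isCompact_closure_unitTriangle.measure_lt_top)
  have hF := memLp_eval (μ := μH[1]) isCompact_closure_unitTriangle frontier_subset_closure
    isClosed_frontier.measurableSet hausdorffMeasure_frontier_lt_top
  let e := LinearEquiv.ofInjective _ (polyToL2_injective k hT)
  have : FiniteDimensional ℝ (LinearMap.range (polyToL2 k _ hT)) := e.finiteDimensional
  -- The trace operator on a finite-dimensional subspace of `L²(T)` is automatically bounded.
  let M := LinearMap.toContinuousLinearMap (polyToL2 k _ hF ∘ₗ e.symm.toLinearMap)
  refine ⟨‖M‖ ^ 2 + 1, by positivity, fun P hP => ?_⟩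
  let p : MvPolynomial.restrictTotalDegree (Fin 2) ℝ k :=
    ⟨P, (MvPolynomial.mem_restrictTotalDegree _ _ _).2 hP⟩
  have hM : ‖polyToL2 k _ hF p‖ ≤ ‖M‖ * ‖polyToL2 k _ hT p‖ := by
    have hMe : M (e p) = polyToL2 k _ hF p := by simp [M]
    rw [← hMe]
    exact M.le_opNorm (e p)
  have hsq : ‖polyToL2 k _ hF p‖ ^ 2 ≤ (‖M‖ ^ 2 + 1) * ‖polyToL2 k _ hT p‖ ^ 2 := by
    nlinarith [pow_le_pow_left₀ (norm_nonneg _) hM 2, sq_nonneg ‖polyToL2 k _ hT p‖]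
  rwa [norm_polyToL2_sq, norm_polyToL2_sq] at hsq

/-- Pulling a polynomial back along the dilation by `h` does not raise its degree. -/
lemma exists_eval_dilation (k : ℕ) (h : ℝ) (P : MvPolynomial (Fin 2) ℝ) (hP : P.totalDegree ≤ k) :
    ∃ Q : MvPolynomial (Fin 2) ℝ, Q.totalDegree ≤ k ∧
      ∀ x : Fin 2 → ℝ, MvPolynomial.eval x Q = MvPolynomial.eval (fun i => h * x i) P := by
  refine ⟨∑ d ∈ P.support, MvPolynomial.monomial d (P.coeff d * ∏ i, h ^ d i), ?_, fun x => ?_⟩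
  · exact MvPolynomial.totalDegree_finsetSum_le fun d hd =>
      (MvPolynomial.totalDegree_monomial_le _ _).trans
        ((MvPolynomial.le_totalDegree hd).trans hP)
  · rw [map_sum, MvPolynomial.eval_eq' _ P]
    refine Finset.sum_congr rfl fun d _ => ?_
    rw [MvPolynomial.eval_monomial, Finsupp.prod_fintype _ _ (by simp), mul_assoc,
      ← Finset.prod_mul_distrib]
    simp [mul_pow]

lemma frontier_smul_unitTriangle {h : ℝ} (hh : 0 < h) :
    frontier (h • unitTriangle) = h • frontier unitTriangle :=
  ((Homeomorph.smulOfNeZero h hh.ne').image_frontier unitTriangle).symm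

/-- One-dimensional Hausdorff measure scales linearly under dilation. -/
lemma setIntegral_hausdorff_smul {h : ℝ} (hh : 0 < h) (S : Set (EuclideanSpace ℝ (Fin 2)))
    (f : EuclideanSpace ℝ (Fin 2) → ℝ) :
    ∫ z in h • S, f z ∂(μH[1]) = h * ∫ z in S, f (h • z) ∂(μH[1]) := by
  let g : EuclideanSpace ℝ (Fin 2) ≃ₜ EuclideanSpace ℝ (Fin 2) := Homeomorph.smulOfNeZero h hh.ne'
  have hmap : (μH[1] : Measure (EuclideanSpace ℝ (Fin 2))) =
      ENNReal.ofReal h • Measure.map g μH[1] := by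
    refine Measure.ext fun s hs => ?_
    have hgs : g ⁻¹' s = h⁻¹ • s := (Set.preimage_smul₀ hh.ne' s)
    rw [Measure.smul_apply, Measure.map_apply g.measurable hs, hgs,
      Measure.hausdorffMeasure_smul₀ zero_le_one (inv_ne_zero hh.ne'),
      ENNReal.smul_def, smul_eq_mul, smul_eq_mul, NNReal.rpow_one, ← mul_assoc]
    have : ENNReal.ofReal h * ((‖h⁻¹‖₊ : NNReal) : ENNReal) = 1 := by
      rw [← enorm_eq_nnnorm, Real.enorm_of_nonneg (by positivity), ← ENNReal.ofReal_mul hh.le,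
        mul_inv_cancel₀ hh.ne', ENNReal.ofReal_one]
    rw [this, one_mul]
  have hpre : g ⁻¹' (h • S) = S := g.injective.preimage_image S
  calc ∫ z in h • S, f z ∂(μH[1])
      = ∫ z in h • S, f z ∂(ENNReal.ofReal h • Measure.map g μH[1]) := by rw [← hmap]
    _ = h * ∫ z in S, f (h • z) ∂(μH[1]) := by
      rw [Measure.restrict_smul, integral_smul_measure, ENNReal.toReal_ofReal hh.le,
        g.measurableEmbedding.setIntegral_map, hpre]
      rfl

/-- for every k there is C > 0, depending only on k, such that
for every h > 0 and every polynomial p of total degree at most k,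
∫_{∂(hT̂)} p² dH¹ ≤ C h⁻¹ ∫_{hT̂} p² dx. -/
theorem polynomial_trace_inequality (k : ℕ) :
    ∃ C : ℝ, 0 < C ∧ ∀ h : ℝ, 0 < h → ∀ P : MvPolynomial (Fin 2) ℝ,
      P.totalDegree ≤ k →
      ∫ z in frontier (h • unitTriangle),
          (MvPolynomial.eval (fun i => z i) P) ^ 2 ∂(μH[1]) ≤
        C * h⁻¹ * ∫ z in h • unitTriangle,
          (MvPolynomial.eval (fun i => z i) P) ^ 2 := by
  obtain ⟨C, hC, hbound⟩ := trace_inequality_unitTriangle k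
  refine ⟨C, hC, fun h hh P hP => ?_⟩
  obtain ⟨Q, hQ, hQP⟩ := exists_eval_dilation k h P hP
  have hvol := Measure.setIntegral_comp_smul_of_pos volume
    (fun z : EuclideanSpace ℝ (Fin 2) => (MvPolynomial.eval (fun i => z i) P) ^ 2) unitTriangle hh
  have href := hbound Q hQ
  simp only [hQP] at href
  simp only [PiLp.smul_apply, smul_eq_mul, finrank_euclideanSpace, Fintype.card_fin] at hvol
  rw [frontier_smul_unitTriangle hh, setIntegral_hausdorff_smul hh]
  simp only [PiLp.smul_apply, smul_eq_mul]
  rw [hvol] at href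
  -- The scaling factors combine as `h * (h ^ 2)⁻¹ = h⁻¹`.
  refine (mul_le_mul_of_nonneg_left href hh.le).trans_eq ?_
  field_simp
end
end
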